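/- For all integers m, n ≥ 2, the number of spanning trees of the complete bipartite graph K_{m,n} is n^{m-1} m^{n-1}; that is, the number of spanning subgraphs T of K_{m,n} (whose vertex set is the disjoint union of a fixed m-element set and a fixed n-element set, and whose edges join only vertices in different parts) such that T is a tree (connected and acyclic) equals n^{m-1} m^{n-1}. -/

import Mathlib

/-!
Orient a spanning tree of a graph `H` on `V` towards a root `r`: it becomes a map `f : V → V`
fixing `r`, sending every other vertex to a neighbour, and all of whose orbits reach `r`. Expanding
the `(r, r)` cofactor of the Laplacian `L` multilinearly along its rows gives a sum of determinants
over all maps `f` satisfying the first two conditions. If the third one holds, the determinant of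
`f` is `1`, because its matrix is unitriangular when the vertices are ordered by the number of steps
to `r`; otherwise it is `0`, because the indicator of the vertices that never reach `r` lies in the
kernel. This is the matrix-tree theorem.

Temperley's formula `det (L + J) = |V| ^ 2 * cofactor`, with `J` the all-ones matrix, turns it into
a statement about the full matrix `L + J`. For `K_{m,n}` the off-diagonal blocks of `L` are `-J`, so
`L + J` is block diagonal with blocks `n I + J` and `m I + J`, whose determinants are
`n ^ (m - 1) * (n + m)` and `m ^ (n - 1) * (m + n)`.
-/

namespace MatrixTree

open SimpleGraph Matrix

section ParentMap

variable {V : Type*} {r : V} {f g : V → V}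

/-- `IsParentMap r f` says that `f` is the parent map of a tree on `V` rooted at `r`: it sends each
vertex to the next one on the way to `r`. The root is taken to be its own parent. -/
structure IsParentMap (r : V) (f : V → V) : Prop where
  map_root : f r = r
  exists_iterate_eq (v : V) : ∃ k : ℕ, f^[k] v = r

/-- The underlying undirected graph of a self-map: `v` and `f v` are adjacent whenever they are
distinct. For a parent map this is the tree that it encodes. -/
def parentGraph (f : V → V) : SimpleGraph V := SimpleGraph.fromRel fun v w ↦ f v = w

lemma parentGraph_adj {v w : V} : (parentGraph f).Adj v w ↔ v ≠ w ∧ (f v = w ∨ f w = v) :=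
  SimpleGraph.fromRel_adj _ v w

namespace IsParentMap

lemma induction (hf : IsParentMap r f) {motive : V → Prop} (root : motive r)
    (step : ∀ v ≠ r, motive (f v) → motive v) (v : V) : motive v := by
  obtain ⟨k, hk⟩ := hf.exists_iterate_eq v
  induction k generalizing v with
  | zero =>
    obtain rfl : v = r := hk
    exact root
  | succ k ih =>
    by_cases hv : v = r
    · exact hv ▸ root
    · exact step v hv (ih (f v) hk)

lemma of_map_lt (hr : f r = r) (φ : V → ℕ) (hφ : ∀ v ≠ r, φ (f v) < φ v) : IsParentMap r f where
  map_root := hr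
  exists_iterate_eq v := by
    induction v using (measure φ).wf.induction with
    | _ v ih =>
      by_cases hv : v = r
      · exact ⟨0, hv⟩
      · obtain ⟨k, hk⟩ := ih (f v) (hφ v hv)
        exact ⟨k + 1, hk⟩

lemma exists_map_lt (hf : IsParentMap r f) : ∃ φ : V → ℕ, ∀ v ≠ r, φ (f v) < φ v := by
  classical
  refine ⟨fun v ↦ Nat.find (hf.exists_iterate_eq v), fun v hv ↦ ?_⟩
  have hpos : 0 < Nat.find (hf.exists_iterate_eq v) := (Nat.find_pos _).2 hv
  have hspec := Nat.find_spec (hf.exists_iterate_eq v)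
  obtain ⟨k, hk⟩ := Nat.exists_eq_add_one.2 hpos
  rw [hk, Function.iterate_succ_apply] at hspec
  exact (Nat.lt_succ_of_le (Nat.find_min' _ hspec)).trans_eq hk.symm

lemma map_map_ne (hf : IsParentMap r f) {v : V} (hv : v ≠ r) : f (f v) ≠ v := by
  revert hv
  induction v using hf.induction with
  | root => exact fun h ↦ absurd rfl h
  | step v hv ih =>
    intro _ hvv
    by_cases hfv : f v = r
    · exact hv (by rw [← hvv, hfv, hf.map_root])
    · exact ih hfv (congrArg f hvv)

lemma map_ne (hf : IsParentMap r f) {v : V} (hv : v ≠ r) : f v ≠ v :=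
  fun h ↦ hf.map_map_ne hv (by rw [h, h])

lemma parentGraph_adj_map (hf : IsParentMap r f) {v : V} (hv : v ≠ r) :
    (parentGraph f).Adj v (f v) :=
  parentGraph_adj.2 ⟨(hf.map_ne hv).symm, Or.inl rfl⟩

end IsParentMap

lemma parentGraph_le {H : SimpleGraph V} (hr : f r = r) (h : ∀ v ≠ r, H.Adj v (f v)) :
    parentGraph f ≤ H := by
  have adj_of_map_eq {v w : V} (hvw : v ≠ w) (hfv : f v = w) : H.Adj v w :=
    hfv ▸ h v (by rintro rfl; exact hvw (hr.symm.trans hfv))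
  intro v w hvw
  obtain ⟨hne, hfv | hfw⟩ := parentGraph_adj.1 hvw
  · exact adj_of_map_eq hne hfv
  · exact (adj_of_map_eq hne.symm hfw).symm

lemma IsParentMap.parentGraph_le_iff {H : SimpleGraph V} (hf : IsParentMap r f) :
    parentGraph f ≤ H ↔ ∀ v ≠ r, H.Adj v (f v) :=
  ⟨fun h _ hv ↦ h (hf.parentGraph_adj_map hv), parentGraph_le hf.map_root⟩

lemma IsParentMap.connected_parentGraph (hf : IsParentMap r f) : (parentGraph f).Connected :=
  (connected_iff_exists_forall_reachable _).2 ⟨r, fun v ↦ by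
    induction v using hf.induction with
    | root => exact Reachable.refl r
    | step v hv ih => exact ih.trans (hf.parentGraph_adj_map hv).symm.reachable⟩

lemma edgeSet_parentGraph_subset (hr : f r = r) :
    (parentGraph f).edgeSet ⊆ (fun v ↦ s(v, f v)) '' {r}ᶜ := by
  rintro ⟨v, w⟩ (hvw : (parentGraph f).Adj v w)
  obtain ⟨hne, rfl | rfl⟩ := parentGraph_adj.1 hvw
  · exact ⟨v, by rintro rfl; exact hne hr.symm, rfl⟩
  · exact ⟨w, by rintro rfl; exact hne hr, Sym2.eq_swap⟩

lemma IsParentMap.isTree_parentGraph [Finite V] (hf : IsParentMap r f) :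
    (parentGraph f).IsTree := by
  have hconn := hf.connected_parentGraph
  refine isTree_iff_connected_and_card.2
    ⟨hconn, le_antisymm ?_ hconn.card_vert_le_card_edgeSet_add_one⟩
  calc Nat.card (parentGraph f).edgeSet + 1
      = (parentGraph f).edgeSet.ncard + 1 := by rw [Nat.card_coe_set_eq]
    _ ≤ ({r}ᶜ : Set V).ncard + 1 := by
      gcongr
      exact (Set.ncard_le_ncard (edgeSet_parentGraph_subset hf.map_root)).trans
        Set.ncard_image_le
    _ = Nat.card V := by rw [add_comm, ← Set.ncard_singleton r, Set.ncard_add_ncard_compl]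

lemma IsParentMap.eq_of_parentGraph_eq (hf : IsParentMap r f) (hg : IsParentMap r g)
    (h : parentGraph f = parentGraph g) : f = g := by
  funext v
  induction v using hf.induction with
  | root => rw [hf.map_root, hg.map_root]
  | step v hv ih =>
    have hadj : (parentGraph g).Adj v (f v) := h ▸ hf.parentGraph_adj_map hv
    obtain ⟨-, hgv | hgfv⟩ := parentGraph_adj.1 hadj
    · exact hgv.symm
    · exact absurd (ih.trans hgfv) (hf.map_map_ne hv)

lemma exists_adj_dist_lt {G : SimpleGraph V} (hG : G.Connected) {v : V} (hv : v ≠ r) :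
    ∃ w, G.Adj v w ∧ G.dist w r < G.dist v r := by
  obtain ⟨p, hp⟩ := hG.exists_walk_length_eq_dist v r
  cases p with
  | nil => exact absurd rfl hv
  | cons hadj q =>
    refine ⟨_, hadj, ?_⟩
    rw [← hp, Walk.length_cons]
    exact Nat.lt_succ_of_le (dist_le q)

lemma exists_isParentMap_adj {G : SimpleGraph V} (hG : G.Connected) (r : V) :
    ∃ f, IsParentMap r f ∧ ∀ v ≠ r, G.Adj v (f v) := by
  classical
  choose! p hadj hlt using fun v (hv : v ≠ r) ↦ exists_adj_dist_lt hG hv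
  have hp {v : V} (hv : v ≠ r) : Function.update p r r v = p v := Function.update_of_ne hv _ _
  exact ⟨Function.update p r r,
    .of_map_lt (Function.update_self ..) (G.dist · r) fun v hv ↦ hp hv ▸ hlt v hv,
    fun v hv ↦ hp hv ▸ hadj v hv⟩

lemma bijOn_parentGraph [Finite V] (r : V) :
    Set.BijOn parentGraph {f | IsParentMap r f} {G | G.IsTree} := by
  refine ⟨fun f hf ↦ hf.isTree_parentGraph, fun f hf g hg ↦ hf.eq_of_parentGraph_eq hg,
    fun G hG ↦ ?_⟩
  obtain ⟨f, hf, hadj⟩ := exists_isParentMap_adj hG.connected r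
  have hle : parentGraph f ≤ G := hf.parentGraph_le_iff.2 hadj
  exact ⟨f, hf, hle.antisymm
    ((isTree_iff_minimal_connected.1 hG).le_of_le hf.connected_parentGraph hle)⟩

lemma card_spanningTree_eq_card_isParentMap [Finite V] (H : SimpleGraph V) (r : V) :
    Nat.card {G : SimpleGraph V // G ≤ H ∧ G.IsTree} =
      Nat.card {f : V → V // IsParentMap r f ∧ ∀ v ≠ r, H.Adj v (f v)} := by
  have hbij : Set.BijOn parentGraph {f | IsParentMap r f ∧ ∀ v ≠ r, H.Adj v (f v)}
      {G | G ≤ H ∧ G.IsTree} := by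
    refine ⟨fun f hf ↦ ⟨hf.1.parentGraph_le_iff.2 hf.2, hf.1.isTree_parentGraph⟩,
      (bijOn_parentGraph r).injOn.mono fun f hf ↦ hf.1, ?_⟩
    rintro G ⟨hle, hG⟩
    obtain ⟨f, hf, rfl⟩ := (bijOn_parentGraph r).surjOn hG
    exact ⟨f, ⟨hf, hf.parentGraph_le_iff.1 hle⟩, rfl⟩
  exact (Nat.card_congr hbij.equiv).symm

end ParentMap

section Cofactor

variable {V : Type*} [DecidableEq V] (R : Type*) [CommRing R] {r : V} {f : V → V}

/-- The matrix with row `e_r` at `r` and row `e_v - e_{f v}` at every `v ≠ r`. These are the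
matrices into which the `(r, r)` cofactor of a Laplacian decomposes. -/
def parentMatrix (r : V) (f : V → V) : Matrix V V R :=
  (of fun v ↦ Pi.single v 1 - Pi.single (f v) 1).updateRow r (Pi.single r 1)

variable {R} in
lemma parentMatrix_root : parentMatrix R r f r = Pi.single r 1 := updateRow_self

variable {R} in
lemma parentMatrix_of_ne {v : V} (hv : v ≠ r) :
    parentMatrix R r f v = Pi.single v 1 - Pi.single (f v) 1 := updateRow_ne hv

variable [Fintype V]

lemma IsParentMap.det_parentMatrix (hf : IsParentMap r f) : (parentMatrix R r f).det = 1 := by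
  obtain ⟨φ, hφ⟩ := hf.exists_map_lt
  have apply_of_le {v w : V} (hvw : φ v ≤ φ w) :
      parentMatrix R r f v w = (1 : Matrix V V R) v w := by
    by_cases hv : v = r
    · rw [hv, parentMatrix_root, one_eq_pi_single]
    · have hfv : w ≠ f v := by rintro rfl; exact (hφ v hv).not_ge hvw
      simp [parentMatrix_of_ne hv, one_eq_pi_single, hfv]
  have htri : (parentMatrix R r f).BlockTriangular (OrderDual.toDual ∘ φ) := by
    intro v w (hvw : φ v < φ w)
    rw [apply_of_le hvw.le, one_apply_ne (by rintro rfl; exact hvw.false)]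
  have hblock (k : ℕᵒᵈ) :
      (parentMatrix R r f).toSquareBlock (OrderDual.toDual ∘ φ) k = 1 := by
    ext ⟨v, hv⟩ ⟨w, hw⟩
    have hvw : φ v = φ w := hv.trans hw.symm
    simp [toSquareBlock_def, apply_of_le hvw.le, one_apply]
  simp [htri.det, hblock]

lemma det_parentMatrix_eq_zero (hr : f r = r) (hf : ¬ IsParentMap r f) :
    (parentMatrix R r f).det = 0 := by
  classical
  have hreach : ¬ ∀ v, ∃ k : ℕ, f^[k] v = r := fun h ↦ hf ⟨hr, h⟩
  obtain ⟨v₀, hv₀⟩ := not_forall.1 hreach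
  let c : V → R := fun v ↦ if ∃ k : ℕ, f^[k] v = r then 0 else 1
  have hcr : c r = 0 := if_pos ⟨0, rfl⟩
  have hcf (v : V) (hv : v ≠ r) : c (f v) = c v := by
    have : (∃ k : ℕ, f^[k] (f v) = r) ↔ ∃ k : ℕ, f^[k] v = r :=
      ⟨fun ⟨k, hk⟩ ↦ ⟨k + 1, hk⟩, fun ⟨k, hk⟩ ↦ by
        cases k with
        | zero => exact absurd hk hv
        | succ k => exact ⟨k, hk⟩⟩
    simp only [c, this]
  have hker : parentMatrix R r f *ᵥ c = 0 := by
    funext v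
    by_cases hv : v = r
    · simp [mulVec, hv, parentMatrix_root, hcr]
    · change parentMatrix R r f v ⬝ᵥ c = 0
      simp [parentMatrix_of_ne hv, sub_dotProduct, hcf v hv]
  exact det_eq_zero_of_mulVec_eq_zero_of_mem_nonZeroDivisors hker (i := v₀)
    (by simp [c, hv₀])

variable (H : SimpleGraph V) [DecidableRel H.Adj]

lemma lapMatrix_apply_eq_sum (v : V) :
    H.lapMatrix R v = ∑ u ∈ H.neighborFinset v, (Pi.single v 1 - Pi.single u 1) := by
  funext w
  rw [Finset.sum_sub_distrib]
  simp [lapMatrix, degMatrix, diagonal_apply, Pi.single_apply, eq_comm]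

lemma adjugate_lapMatrix_eq_sum (r : V) :
    (H.lapMatrix R).adjugate r r =
      ∑ f : V → V with f r = r ∧ ∀ v ≠ r, H.Adj v (f v), (parentMatrix R r f).det := by
  let row (v u : V) : V → R := if v = r then Pi.single r 1 else Pi.single v 1 - Pi.single u 1
  let choices : V → Finset V := Function.update (fun v ↦ H.neighborFinset v) r {r}
  have hrow (f : V → V) : parentMatrix R r f = fun v ↦ row v (f v) := by
    funext v
    by_cases hv : v = r
    · simp [row, hv, parentMatrix_root]
    · simp [row, hv, parentMatrix_of_ne]
  have hlap : (H.lapMatrix R).updateRow r (Pi.single r 1) =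
      fun v ↦ ∑ u ∈ choices v, row v u := by
    funext v
    by_cases hv : v = r
    · subst hv
      simp [row, choices]
    · simp [row, choices, hv, updateRow_ne, lapMatrix_apply_eq_sum]
  have hchoices : ({f : V → V | f r = r ∧ ∀ v ≠ r, H.Adj v (f v)} : Finset (V → V)) =
      Fintype.piFinset choices := by
    ext f
    rw [Fintype.mem_piFinset, Function.forall_update_iff _ fun v s ↦ f v ∈ s]
    simp
  simp only [adjugate_apply, hlap, hrow, hchoices]
  exact (detRowAlternating (n := V) (R := R)).toMultilinearMap.map_sum_finset row _

theorem adjugate_lapMatrix_apply_self (r : V) :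
    (H.lapMatrix R).adjugate r r = Nat.card {G : SimpleGraph V // G ≤ H ∧ G.IsTree} := by
  classical
  have hdet : ∀ f ∈ ({f : V → V | f r = r ∧ ∀ v ≠ r, H.Adj v (f v)} : Finset (V → V)),
      (parentMatrix R r f).det = if IsParentMap r f then 1 else 0 := by
    intro f hf
    split_ifs with hparent
    · exact hparent.det_parentMatrix R
    · exact det_parentMatrix_eq_zero R (Finset.mem_filter_univ f |>.1 hf).1 hparent
  rw [adjugate_lapMatrix_eq_sum, Finset.sum_congr rfl hdet, Finset.sum_boole,
    Finset.filter_filter, card_spanningTree_eq_card_isParentMap H r, Nat.card_eq_fintype_card,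
    Fintype.card_subtype]
  congr! 3 with f
  exact ⟨fun h ↦ ⟨h.2, h.1.2⟩, fun h ↦ ⟨⟨h.1.map_root, h.2⟩, h.1⟩⟩

end Cofactor

section Temperley

variable {n R : Type*} [Fintype n] [DecidableEq n] [CommRing R] {M : Matrix n n R}

lemma det_add_vecMulVec_one_one_eq_card_mul_det_updateRow (hM : 1 ᵥ* M = 0) (i : n) :
    (M + vecMulVec 1 1).det = Fintype.card n * (M.updateRow i 1).det := by
  have hsum : 1 ᵥ* (M + vecMulVec 1 1) = (Fintype.card n : R) • 1 := by
    rw [vecMul_add, hM, vecMul_vecMulVec, one_dotProduct_one, zero_add]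
  calc (M + vecMulVec 1 1).det
      = ((M + vecMulVec 1 1).updateRow i (1 ᵥ* (M + vecMulVec 1 1))).det := by
        rw [vecMul_eq_sum, det_updateRow_sum, Pi.one_apply, one_smul]
    _ = (Fintype.card n : R) * ((M + vecMulVec 1 1).updateRow i 1).det := by
        rw [hsum, det_updateRow_smul]
    _ = (Fintype.card n : R) * (M.updateRow i 1).det := by
        congr 1
        refine det_eq_of_forall_row_eq_smul_add_const (fun k ↦ if k = i then 0 else 1) i
          (if_pos rfl) fun k j ↦ ?_
        by_cases hk : k = i <;> simp [hk, updateRow_apply]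

lemma det_updateRow_one_eq_card_mul_adjugate (hM : M *ᵥ 1 = 0) (i : n) :
    (M.updateRow i 1).det = Fintype.card n * M.adjugate i i := by
  set A := M.updateRow i 1 with hA
  have hA1 : A *ᵥ 1 = (Fintype.card n : R) • Pi.single i 1 := by
    rw [updateRow_mulVec, hM, one_dotProduct_one, ← Pi.single_smul, smul_eq_mul, mul_one]
    rfl
  have hadj : A.adjugate i i = M.adjugate i i := by
    rw [adjugate_apply, adjugate_apply, hA, updateRow_idem]
  have := congrFun (congrArg (A.adjugate *ᵥ ·) hA1) i
  simpa [mulVec_mulVec, adjugate_mul, mulVec_smul, smul_mulVec, hadj] using this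

theorem det_add_vecMulVec_one_one_eq_sq_card_mul_adjugate
    (hrow : M *ᵥ 1 = 0) (hcol : 1 ᵥ* M = 0) (i : n) :
    (M + vecMulVec 1 1).det = Fintype.card n ^ 2 * M.adjugate i i := by
  rw [det_add_vecMulVec_one_one_eq_card_mul_det_updateRow hcol i,
    det_updateRow_one_eq_card_mul_adjugate hrow, sq, mul_assoc]

variable (R) in
theorem det_lapMatrix_add_vecMulVec_one_one [Nonempty n]
    (H : SimpleGraph n) [DecidableRel H.Adj] :
    (H.lapMatrix R + vecMulVec 1 1).det =
      (Fintype.card n : R) ^ 2 * Nat.card {G : SimpleGraph n // G ≤ H ∧ G.IsTree} := by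
  have hrow : H.lapMatrix R *ᵥ 1 = 0 := H.lapMatrix_mulVec_const_eq_zero
  have hcol : 1 ᵥ* H.lapMatrix R = 0 := by
    rw [← mulVec_transpose, (H.isSymm_lapMatrix R).eq, hrow]
  rw [det_add_vecMulVec_one_one_eq_sq_card_mul_adjugate hrow hcol (Classical.arbitrary n),
    adjugate_lapMatrix_apply_self]

lemma det_smul_one_add_vecMulVec [Nonempty n] (a : R) (u v : n → R) :
    (a • (1 : Matrix n n R) + vecMulVec u v).det =
      a ^ (Fintype.card n - 1) * (a + u ⬝ᵥ v) := by
  have h := congrArg (Polynomial.eval a) (charpoly_vecMulVec (-u) v)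
  rw [eval_charpoly] at h
  rw [mul_add, pow_sub_one_mul Fintype.card_ne_zero, mul_comm _ (u ⬝ᵥ v)]
  simpa [smul_one_eq_diagonal, neg_vecMulVec] using h

end Temperley

section CompleteBipartite

variable {S T : Type*} [Fintype S] [Fintype T] [DecidableRel (completeBipartiteGraph S T).Adj]

lemma degree_completeBipartiteGraph_inl (s : S) :
    (completeBipartiteGraph S T).degree (Sum.inl s) = Fintype.card T := by
  have : (completeBipartiteGraph S T).neighborFinset (Sum.inl s) =
      Finset.univ.map Function.Embedding.inr := by ext (x | x) <;> simp
  rw [← card_neighborFinset_eq_degree, this, Finset.card_map, Finset.card_univ]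

lemma degree_completeBipartiteGraph_inr (t : T) :
    (completeBipartiteGraph S T).degree (Sum.inr t) = Fintype.card S := by
  have : (completeBipartiteGraph S T).neighborFinset (Sum.inr t) =
      Finset.univ.map Function.Embedding.inl := by ext (x | x) <;> simp
  rw [← card_neighborFinset_eq_degree, this, Finset.card_map, Finset.card_univ]

lemma lapMatrix_completeBipartiteGraph_add_vecMulVec_one_one [DecidableEq S] [DecidableEq T]
    (R : Type*) [Ring R] :
    (completeBipartiteGraph S T).lapMatrix R + vecMulVec 1 1 =
      fromBlocks ((Fintype.card T : R) • 1 + vecMulVec 1 1) 0 0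
        ((Fintype.card S : R) • 1 + vecMulVec 1 1) := by
  ext (i | i) (j | j) <;>
    simp [lapMatrix, degMatrix, diagonal_apply, one_apply,
      degree_completeBipartiteGraph_inl, degree_completeBipartiteGraph_inr]

end CompleteBipartite

end MatrixTree

open MatrixTree in
/-- Scoins's formula: for `m, n ≥ 2`, the number of spanning trees of the complete
bipartite graph `K_{m,n}` (spanning subgraphs of `K_{m,n}` that are trees) equals
`n ^ (m - 1) * m ^ (n - 1)`. -/
theorem stmt9 (m n : ℕ) (hm : 2 ≤ m) (hn : 2 ≤ n)
    (S T : Type*) [Fintype S] [Fintype T]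
    (hS : Fintype.card S = m) (hT : Fintype.card T = n) :
    Nat.card {G : SimpleGraph (S ⊕ T) //
        G ≤ completeBipartiteGraph S T ∧ G.IsTree} = n ^ (m - 1) * m ^ (n - 1) := by
  classical
  have : Nonempty S := Fintype.card_pos_iff.1 (by lia)
  have : Nonempty T := Fintype.card_pos_iff.1 (by lia)
  have temperley := det_lapMatrix_add_vecMulVec_one_one ℤ (completeBipartiteGraph S T)
  rw [lapMatrix_completeBipartiteGraph_add_vecMulVec_one_one, Matrix.det_fromBlocks_zero₂₁,
    det_smul_one_add_vecMulVec, det_smul_one_add_vecMulVec, one_dotProduct_one, one_dotProduct_one,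
    Fintype.card_sum, hS, hT] at temperley
  norm_cast at temperley
  refine Nat.eq_of_mul_eq_mul_left (show 0 < (m + n) ^ 2 by positivity) ?_
  rw [← temperley]
  ring
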